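/- arXiv:1209.4632 — 5 statements merged into one kernel-verified Lean document; each statement's English description precedes it below -/
import Mathlib

section
/- For every integer m > 1, the real polynomial Bohnenblust–Hille constant satisfies D_{ℝ,m} > (2·3^{1/4}/√5)^m > (1.17)^m. -/
open MvPolynomial Filter

/-- The sup norm of a real polynomial in `n` variables over the cube `[-1,1]^n`. -/
noncomputable def supNorm {n : ℕ} (P : MvPolynomial (Fin n) ℝ) : ℝ :=
  sSup {y : ℝ | ∃ x : Fin n → ℝ, (∀ i, |x i| ≤ 1) ∧ y = |eval x P|}

/-- The `ℓ_p` norm of the coefficients of a real polynomial. -/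
noncomputable def lpNorm {n : ℕ} (p : ℝ) (P : MvPolynomial (Fin n) ℝ) : ℝ :=
  (∑ α ∈ P.support, |coeff α P| ^ p) ^ (1 / p)

/-- The real polynomial Bohnenblust–Hille constant `D_{ℝ,m}`. -/
noncomputable def BHconst (m : ℕ) : ℝ :=
  sInf {D : ℝ | 0 < D ∧ ∀ (n : ℕ) (P : MvPolynomial (Fin n) ℝ),
    P.IsHomogeneous m → lpNorm (2 * m / (m + 1)) P ≤ D * supNorm P}

/-- The real polynomial Bohnenblust–Hille constant `D_{ℝ,m}(n)` in a fixed number `n`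
of variables. -/
noncomputable def BHconstN (m n : ℕ) : ℝ :=
  sInf {D : ℝ | 0 < D ∧ ∀ P : MvPolynomial (Fin n) ℝ,
    P.IsHomogeneous m → lpNorm (2 * m / (m + 1)) P ≤ D * supNorm P}

open scoped BigOperators
structure Good {I Ω : Type} [Fintype I] [Fintype Ω] (φ : I → Ω → ℝ) (K : ℝ) : Prop where
  sq : ∀ a : I → ℝ, 𝔼 ω, (∑ i, a i * φ i ω) ^ 2 = ∑ i, a i ^ 2
  four : ∀ a : I → ℝ, 𝔼 ω, (∑ i, a i * φ i ω) ^ 4 ≤ K * (∑ i, a i ^ 2) ^ 2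

def sg (b : Bool) : ℝ := if b then 1 else -1

lemma sg_abs (b : Bool) : |sg b| ≤ 1 := by cases b <;> simp [sg]

lemma expect_prod' {A B : Type} [Fintype A] [Fintype B] (F : A × B → ℝ) :
    𝔼 q, F q = 𝔼 a, 𝔼 b, F (a, b) := by
  rw [← Finset.univ_product_univ, Finset.expect_product]

lemma expect_cons' {X : Type} [Fintype X] {n : ℕ} (F : (Fin (n+1) → X) → ℝ) :
    𝔼 ω, F ω = 𝔼 x, 𝔼 ω', F (Fin.cons x ω') := by
  rw [← expect_prod' (fun q : X × (Fin n → X) => F (Fin.cons q.1 q.2))]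
  exact (Fintype.expect_equiv (Fin.consEquiv (fun _ => X)) _ _ (fun i => rfl)).symm

lemma expect_bool (F : Bool → ℝ) : 𝔼 b, F b = (F true + F false) / 2 := by
  rw [Fintype.expect_eq_sum_div_card]; simp

lemma good_rad (n : ℕ) : Good (fun (j : Fin n) (ω : Fin n → Bool) => sg (ω j)) 3 := by
  induction n with
  | zero => constructor <;> intro a <;> simp
  | succ n ih =>
    have h2 : ∀ a : Fin (n+1) → ℝ,
        𝔼 ω : Fin (n+1) → Bool, (∑ i, a i * sg (ω i)) ^ 2 = ∑ i, a i ^ 2 := by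
      intro a
      have := ih.sq (fun i => a i.succ)
      rw [expect_cons', Finset.expect_comm]
      simp only [expect_bool, Fin.sum_univ_succ, Fin.cons_zero, Fin.cons_succ]
      rw [← this]
      have : ∀ ω : Fin n → Bool, ((a 0 * sg true + ∑ i : Fin n, a i.succ * sg (ω i)) ^ 2 +
        (a 0 * sg false + ∑ i : Fin n, a i.succ * sg (ω i)) ^ 2) / 2 = a 0 ^ 2 +
         (∑ i : Fin n, a i.succ * sg (ω i)) ^ 2 := by
        intro ω; simp only [sg]; simp; ring
      simp only [this, Finset.expect_add_distrib, Fintype.expect_const]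
    refine ⟨h2, fun a => ?_⟩
    have e2 := ih.sq (fun i => a i.succ)
    have e4 := ih.four (fun i => a i.succ)
    rw [expect_cons', Finset.expect_comm]
    simp only [expect_bool, Fin.sum_univ_succ, Fin.cons_zero, Fin.cons_succ]
    have : ∀ ω : Fin n → Bool, ((a 0 * sg true + ∑ i : Fin n, a i.succ * sg (ω i)) ^ 4 +
        (a 0 * sg false + ∑ i : Fin n, a i.succ * sg (ω i)) ^ 4) / 2 = a 0 ^ 4 +
         6 * a 0 ^ 2 * (∑ i : Fin n, a i.succ * sg (ω i)) ^ 2 + 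
         (∑ i : Fin n, a i.succ * sg (ω i)) ^ 4 := by
        intro ω; simp only [sg]; simp; ring
    simp only [this, Finset.expect_add_distrib, Fintype.expect_const, ← Finset.mul_expect, e2]
    nlinarith [sq_nonneg (a 0 ^ 2)]

lemma Good.tensor {I Ω J Ω' : Type} [Fintype I] [Fintype Ω] [Fintype J] [Fintype Ω']
    {φ : I → Ω → ℝ} {K : ℝ} {ψ : J → Ω' → ℝ} {K' : ℝ} (h : Good φ K) (h' : Good ψ K')
    (hK : 0 ≤ K) (hK' : 0 ≤ K') :
    Good (fun (p : I × J) (q : Ω × Ω') => φ p.1 q.1 * ψ p.2 q.2) (K * K') := by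
  have key : ∀ (a : I × J → ℝ) (ω : Ω) (ω' : Ω'),
      ∑ p : I × J, a p * (φ p.1 ω * ψ p.2 ω') = ∑ i, (∑ j, a (i, j) * ψ j ω') * φ i ω := by
    intro a ω ω'
    rw [Fintype.sum_prod_type]
    refine Finset.sum_congr rfl fun i _ => ?_
    rw [Finset.sum_mul]
    refine Finset.sum_congr rfl fun j _ => ?_
    ring
  constructor
  · intro a
    rw [expect_prod', Finset.expect_comm]
    simp only [key, h.sq]
    rw [Finset.expect_sum_comm]
    simp only [h'.sq (fun j => a (_, j))]
    rw [Fintype.sum_prod_type]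
  · intro a
    rw [expect_prod', Finset.expect_comm]
    simp only [key]
    calc _ ≤ 𝔼 ω', K * (∑ i, (∑ j, a (i, j) * ψ j ω') ^ 2) ^ 2 :=
          Finset.expect_le_expect fun ω' _ => h.four _
      _ = K * ∑ i, ∑ i', 𝔼 ω', (∑ j, a (i, j) * ψ j ω') ^ 2 * (∑ j, a (i', j) * ψ j ω') ^ 2 := by
          rw [← Finset.mul_expect]
          have e : ∀ X : I → ℝ, (∑ i, X i) ^ 2 = ∑ i, ∑ i', X i * X i' := fun X => by
            rw [pow_two, Finset.sum_mul_sum]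
          simp only [e (fun i => (∑ j, a (i, j) * ψ j _) ^ 2), Finset.expect_sum_comm]
      _ ≤ K * ∑ i, ∑ i', K' * ((∑ j, a (i, j) ^ 2) * (∑ j, a (i', j) ^ 2)) := by
          gcongr with i _ i' _
          have c := Finset.expect_mul_sq_le_sq_mul_sq Finset.univ
            (fun ω' => (∑ j, a (i, j) * ψ j ω') ^ 2) (fun ω' => (∑ j, a (i', j) * ψ j ω') ^ 2)
          simp only [← pow_mul] at c
          norm_num at c
          have f1 := h'.four (fun j => a (i, j))
          have f2 := h'.four (fun j => a (i', j))
          have n1 : 0 ≤ ∑ j, a (i, j) ^ 2 := by positivity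
          have n2 : 0 ≤ ∑ j, a (i', j) ^ 2 := by positivity
          refine le_of_sq_le_sq ?_ (by positivity)
          refine c.trans ?_
          calc _ ≤ (K' * (∑ j, a (i, j) ^ 2) ^ 2) * (K' * (∑ j, a (i', j) ^ 2) ^ 2) := by
                refine mul_le_mul f1 f2 ?_ (by positivity)
                exact Finset.expect_nonneg fun _ _ => by positivity
            _ = _ := by ring
      _ = _ := by
          rw [Fintype.sum_prod_type]
          simp only [← Finset.mul_sum, ← Finset.sum_mul]
          ring

lemma Good.equiv {I Ω I' Ω' : Type} [Fintype I] [Fintype Ω] [Fintype I'] [Fintype Ω']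
    {φ : I → Ω → ℝ} {K : ℝ} (h : Good φ K) (e : I ≃ I') (g : Ω ≃ Ω') (ψ : I' → Ω' → ℝ)
    (hh : ∀ i ω, ψ (e i) (g ω) = φ i ω) : Good ψ K := by
  have key : ∀ (a : I' → ℝ) (ω : Ω), ∑ i, a i * ψ i (g ω) = ∑ i, a (e i) * φ i ω := by
    intro a ω
    rw [← e.sum_comp]
    simp [hh]
  constructor
  · intro a
    rw [← Fintype.expect_equiv g _ _ (fun _ => rfl)]
    simp only [key]
    rw [h.sq, e.sum_comp (fun i => a i ^ 2)]
  · intro a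
    rw [← Fintype.expect_equiv g _ _ (fun _ => rfl)]
    simp only [key]
    rw [← e.sum_comp (fun i => a i ^ 2)]
    exact h.four _

lemma good_chaos (n d : ℕ) : Good (fun (i : Fin d → Fin n) (ω : Fin d → Fin n → Bool) =>
    ∏ k, sg (ω k (i k))) (3 ^ d) := by
  induction d with
  | zero => constructor <;> intro a <;> simp [← pow_mul]
  | succ d ih =>
    rw [pow_succ, mul_comm]
    refine ((good_rad n).tensor ih (by norm_num) (by positivity)).equiv
      (Fin.consEquiv fun _ => Fin n) (Fin.consEquiv fun _ => Fin n → Bool) _ ?_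
    intro i ω
    simp [Fin.prod_univ_succ, Fin.consEquiv]

lemma Good.khin {I Ω : Type} [Fintype I] [Fintype Ω] {φ : I → Ω → ℝ} {K : ℝ} (h : Good φ K)
    (hK : 0 ≤ K) (a : I → ℝ) :
    Real.sqrt (∑ i, a i ^ 2) ≤ Real.sqrt K * 𝔼 ω, |∑ i, a i * φ i ω| := by
  set f : Ω → ℝ := fun ω => ∑ i, a i * φ i ω with hf
  set S := ∑ i, a i ^ 2
  have h2 : 𝔼 ω, f ω ^ 2 = S := h.sq a
  have h4 : 𝔼 ω, f ω ^ 4 ≤ K * S ^ 2 := h.four a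
  have hS : 0 ≤ S := by positivity
  have h1n : 0 ≤ 𝔼 ω, |f ω| := Finset.expect_nonneg fun _ _ => by positivity
  have c1 := Finset.expect_mul_sq_le_sq_mul_sq Finset.univ
    (fun ω => Real.sqrt |f ω|) (fun ω => Real.sqrt |f ω| * |f ω|)
  have c2 := Finset.expect_mul_sq_le_sq_mul_sq Finset.univ
    (fun ω => |f ω|) (fun ω => f ω ^ 2)
  have r1 : ∀ ω, Real.sqrt |f ω| * (Real.sqrt |f ω| * |f ω|) = f ω ^ 2 := by
    intro ω
    rw [← mul_assoc, Real.mul_self_sqrt (abs_nonneg _), ← pow_two, sq_abs]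
  have r2 : ∀ ω, (Real.sqrt |f ω| * |f ω|) ^ 2 = |f ω| * f ω ^ 2 := by
    intro ω
    rw [mul_pow, Real.sq_sqrt (abs_nonneg _), sq_abs]
  have r3 : ∀ ω, (f ω ^ 2) ^ 2 = f ω ^ 4 := fun ω => by ring
  simp only [r1, r2, h2, Real.sq_sqrt (abs_nonneg _)] at c1
  simp only [r3, h2, sq_abs] at c2
  set E1 := 𝔼 ω, |f ω|
  set E3 := 𝔼 ω, |f ω| * f ω ^ 2
  have hfin : S ≤ K * E1 ^ 2 := by
    rcases hS.eq_or_lt with h0 | h0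
    · rw [← h0]; positivity
    have : S ^ 4 ≤ E1 ^ 2 * (S * (K * S ^ 2)) := by
      calc S ^ 4 = (S ^ 2) ^ 2 := by ring
        _ ≤ (E1 * E3) ^ 2 := by gcongr
        _ = E1 ^ 2 * E3 ^ 2 := by ring
        _ ≤ _ := by
          gcongr
          exact c2.trans (by gcongr)
    have h3 : 0 < S ^ 3 := by positivity
    nlinarith
  calc Real.sqrt S ≤ Real.sqrt (K * E1 ^ 2) := Real.sqrt_le_sqrt hfin
    _ = _ := by rw [Real.sqrt_mul hK, Real.sqrt_sq h1n]

lemma blei_pt {m : ℕ} (hm : 0 < m) (c : ℝ) (v : Fin m → ℝ) (hv : ∀ k, 0 ≤ v k)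
    (hc : c ≠ 0 → ∀ k, v k ≠ 0) :
    |c| ^ (2 * m / (m + 1) : ℝ) ≤ (1 / (m + 1) : ℝ) * (∑ k, c ^ 2 / v k + ∏ k, v k) := by
  have hp : (0 : ℝ) < 2 * m / (m + 1) := by positivity
  by_cases h0 : c = 0
  · subst h0
    have : 0 ≤ ∏ k, v k := Finset.prod_nonneg fun k _ => hv k
    rw [abs_zero, Real.zero_rpow hp.ne']
    simp; positivity
  have hv' := hc h0
  have hprod : 0 ≤ ∏ k, v k := Finset.prod_nonneg fun k _ => hv k
  let z : Option (Fin m) → ℝ := fun o => o.elim (∏ k, v k) (fun k => c ^ 2 / v k)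
  have hz : ∀ o, 0 ≤ z o := by
    intro o
    cases o with
    | none => exact hprod
    | some k => exact div_nonneg (sq_nonneg _) (hv k)
  have := Real.geom_mean_le_arith_mean_weighted Finset.univ (fun _ : Option (Fin m) => (1 / (m + 1) : ℝ)) z
    (fun _ _ => by positivity) (by simp; field_simp) (fun o _ => hz o)
  rw [← Finset.mul_sum, Real.finsetProd_rpow _ _ (fun o _ => hz o), Fintype.sum_option,
    Fintype.prod_option] at this
  simp only [z, Option.elim] at this
  rw [add_comm (∏ k, v k)] at this
  refine le_trans (le_of_eq ?_) this
  rw [Finset.prod_div_distrib, mul_div_cancel₀ _ (Finset.prod_ne_zero_iff.2 fun k _ => hv' k)]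
  rw [Finset.prod_const, ← sq_abs, Finset.card_univ, Fintype.card_fin, ← pow_mul,
    ← Real.rpow_natCast, ← Real.rpow_mul (abs_nonneg _)]
  congr 1
  push_cast
  ring

lemma blei_one {m n : ℕ} (hm : 0 < m) (b : (Fin m → Fin n) → ℝ) (w : Fin m → Fin n → ℝ)
    (hw0 : ∀ k j, 0 ≤ w k j) (hw : ∀ k j, ∑ i with i k = j, b i ^ 2 = w k j ^ 2)
    (hW : ∀ k, ∑ j, w k j ≤ 1) : ∑ i, |b i| ^ (2 * m / (m + 1) : ℝ) ≤ 1 := by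
  have h1 : ∀ i, |b i| ^ (2 * m / (m + 1) : ℝ) ≤
      (1 / (m + 1) : ℝ) * (∑ k, b i ^ 2 / w k (i k) + ∏ k, w k (i k)) := by
    intro i
    refine blei_pt hm _ _ (fun k => hw0 _ _) ?_
    intro hb k h0
    have := hw k (i k)
    rw [h0] at this
    have h2 : b i ^ 2 ≤ ∑ i' with i' k = i k, b i' ^ 2 :=
      Finset.single_le_sum (f := fun i' => b i' ^ 2) (fun _ _ => sq_nonneg _) (by simp)
    have : 0 < b i ^ 2 := by positivity
    linarith
  have h2 : ∀ k, ∑ i, b i ^ 2 / w k (i k) ≤ 1 := by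
    intro k
    refine le_trans (le_of_eq ?_) (hW k)
    rw [← Finset.sum_fiberwise Finset.univ (fun i : Fin m → Fin n => i k)]
    refine Finset.sum_congr rfl fun j _ => ?_
    have : ∀ i ∈ Finset.univ.filter (fun i : Fin m → Fin n => i k = j),
        b i ^ 2 / w k (i k) = b i ^ 2 / w k j := by
      intro i hi
      rw [(Finset.mem_filter.1 hi).2]
    rw [Finset.sum_congr rfl this, ← Finset.sum_div, hw, pow_two, mul_self_div_self]
  have h3 : ∑ i : Fin m → Fin n, ∏ k, w k (i k) ≤ 1 := by
    have := Finset.prod_univ_sum (fun _ : Fin m => (Finset.univ : Finset (Fin n))) w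
    rw [Fintype.piFinset_univ] at this
    rw [← this]
    exact Finset.prod_le_one (fun k _ => Finset.sum_nonneg fun j _ => hw0 k j) (fun k _ => hW k)
  calc _ ≤ ∑ i, (1 / (m + 1) : ℝ) * (∑ k, b i ^ 2 / w k (i k) + ∏ k, w k (i k)) :=
        Finset.sum_le_sum fun i _ => h1 i
    _ = (1 / (m + 1) : ℝ) * (∑ k, ∑ i, b i ^ 2 / w k (i k) + ∑ i : Fin m → Fin n, ∏ k, w k (i k)) := by
        rw [← Finset.mul_sum, Finset.sum_add_distrib, Finset.sum_comm]
    _ ≤ (1 / (m + 1) : ℝ) * (∑ k : Fin m, 1 + 1) := by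
        gcongr with k
        exact h2 k
    _ = 1 := by simp; field_simp

lemma blei {m n : ℕ} (hm : 0 < m) (b : (Fin m → Fin n) → ℝ) (W : ℝ) (hW0 : 0 < W)
    (hW : ∀ k, ∑ j, Real.sqrt (∑ i with i k = j, b i ^ 2) ≤ W) :
    ∑ i, |b i| ^ (2 * m / (m + 1) : ℝ) ≤ W ^ (2 * m / (m + 1) : ℝ) := by
  have := blei_one hm (fun i => b i / W) (fun k j => Real.sqrt (∑ i with i k = j, b i ^ 2) / W)
    (fun k j => by positivity) ?_ ?_
  · simp only [abs_div, abs_of_pos hW0, Real.div_rpow (abs_nonneg _) hW0.le] at this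
    rw [← Finset.sum_div, div_le_one (by positivity)] at this
    exact this
  · intro k j
    simp only [div_pow]
    rw [Real.sq_sqrt (by positivity), Finset.sum_div]
  · intro k
    rw [← Finset.sum_div, div_le_one hW0]
    exact hW k

lemma sum_insertNth {d n : ℕ} (k : Fin (d+1)) (F : (Fin (d+1) → Fin n) → ℝ) :
    ∑ i, F i = ∑ j, ∑ i' : Fin d → Fin n, F (k.insertNth j i') := by
  rw [← (Fin.insertNthEquiv (fun _ => Fin n) k).sum_comp, Fintype.sum_prod_type]
  rfl

lemma mixed {d n : ℕ} (b : (Fin (d+1) → Fin n) → ℝ) (M : ℝ)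
    (hM : ∀ ω : Fin (d+1) → Fin n → Bool, |∑ i, b i * ∏ k, sg (ω k (i k))| ≤ M) (k : Fin (d+1)) :
    ∑ j, Real.sqrt (∑ i with i k = j, b i ^ 2) ≤ Real.sqrt (3 ^ d) * M := by
  have h1 : ∀ j, ∑ i with i k = j, b i ^ 2 = ∑ i' : Fin d → Fin n, b (k.insertNth j i') ^ 2 := by
    intro j
    rw [Finset.sum_filter, sum_insertNth k, Finset.sum_comm]
    simp
  simp only [h1]
  calc _ ≤ ∑ j, Real.sqrt (3 ^ d) * 𝔼 ω : Fin d → Fin n → Bool,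
          |∑ i', b (k.insertNth j i') * ∏ l, sg (ω l (i' l))| :=
        Finset.sum_le_sum fun j _ => (good_chaos n d).khin (by positivity) _
    _ = Real.sqrt (3 ^ d) * 𝔼 ω : Fin d → Fin n → Bool,
          ∑ j, |∑ i', b (k.insertNth j i') * ∏ l, sg (ω l (i' l))| := by
        rw [← Finset.mul_sum, Finset.expect_sum_comm]
    _ ≤ _ := by
        gcongr
        refine Finset.expect_le Finset.univ_nonempty fun ω _ => ?_
        set R : Fin n → ℝ := fun j => ∑ i', b (k.insertNth j i') * ∏ l, sg (ω l (i' l)) with hR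
        refine le_trans ?_ (hM (k.insertNth (fun j => decide (0 ≤ R j)) ω))
        refine le_trans (le_of_eq ?_) (le_abs_self _)
        rw [sum_insertNth k]
        refine Finset.sum_congr rfl fun j _ => ?_
        have : |R j| = sg (decide (0 ≤ R j)) * R j := by
          by_cases h : 0 ≤ R j
          · simp [sg, h, abs_of_nonneg h]
          · simp [sg, h, abs_of_neg (not_le.1 h)]
        change |R j| = _
        rw [this]
        conv_lhs => rw [hR]
        simp only [Finset.mul_sum]
        refine Finset.sum_congr rfl fun i' _ => ?_
        rw [Fin.prod_univ_succAbove _ k]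
        simp
        ring

lemma exists_rep {n : ℕ} : ∀ (m : ℕ) (α : Fin n →₀ ℕ), α.degree = m →
    ∃ j : Fin m → Fin n, α = ∑ k, Finsupp.single (j k) 1 := by
  intro m
  induction m with
  | zero =>
    intro α h
    refine ⟨Fin.elim0, ?_⟩
    simpa [Finsupp.degree_eq_zero_iff] using h
  | succ m ih =>
    intro α h
    have h0 : α ≠ 0 := by rintro rfl; simp at h
    obtain ⟨x, hx⟩ := Finsupp.ne_iff.1 h0
    have hle : Finsupp.single x 1 ≤ α := by
      rw [Finsupp.single_le_iff]
      simp at hx; omega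
    obtain ⟨β, rfl⟩ := exists_add_of_le hle
    obtain ⟨j, hj⟩ := ih β (by
      rw [map_add, Finsupp.degree_single] at h; omega)
    refine ⟨Fin.cons x j, ?_⟩
    rw [Fin.sum_univ_succ]
    simp [← hj]

lemma sign_avg {m : ℕ} (f : Fin m → Fin m) (hf : ¬ Function.Surjective f) :
    𝔼 ε : Fin m → Bool, (∏ k, sg (ε k)) * ∏ l, sg (ε (f l)) = 0 := by
  unfold Function.Surjective at hf
  push Not at hf
  obtain ⟨k₀, hk⟩ := hf
  have : 𝔼 ε : Fin m → Bool, (∏ k, sg (ε k)) * ∏ l, sg (ε (f l)) =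
      𝔼 ε : Fin m → Bool, -((∏ k, sg (ε k)) * ∏ l, sg (ε (f l))) := by
    refine Fintype.expect_equiv
      (Equiv.piCongrRight (fun k => if k = k₀ then Equiv.boolNot else Equiv.refl Bool)) _ _ ?_
    intro ε
    have e2 : ∏ l, sg (Equiv.piCongrRight (fun k => if k = k₀ then Equiv.boolNot else Equiv.refl Bool) ε (f l))
        = ∏ l, sg (ε (f l)) := by
      refine Finset.prod_congr rfl fun l _ => ?_
      simp [hk l]
    have e1 : ∏ k, sg (Equiv.piCongrRight (fun k => if k = k₀ then Equiv.boolNot else Equiv.refl Bool) ε k)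
        = - ∏ k, sg (ε k) := by
      rw [← Finset.mul_prod_erase _ _ (Finset.mem_univ k₀),
        ← Finset.mul_prod_erase Finset.univ (fun k => sg (ε k)) (Finset.mem_univ k₀), ← neg_mul]
      congr 1
      · simp; cases ε k₀ <;> simp [sg]
      · refine Finset.prod_congr rfl fun l hl => ?_
        simp [Finset.ne_of_mem_erase hl]
    rw [e1, e2]; ring
  rw [Finset.expect_neg_distrib] at this
  linarith

lemma polar {m n : ℕ} (j : Fin m → Fin n) (x : Fin m → Fin n → ℝ) :
    𝔼 ε : Fin m → Bool, (∏ k, sg (ε k)) * ∏ l, (∑ k, sg (ε k) * x k (j l)) =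
      ∑ σ : Equiv.Perm (Fin m), ∏ k, x k (j (σ k)) := by
  have h1 : ∀ ε : Fin m → Bool, (∏ k, sg (ε k)) * ∏ l, (∑ k, sg (ε k) * x k (j l)) =
      ∑ f : Fin m → Fin m, ((∏ k, sg (ε k)) * ∏ l, sg (ε (f l))) * ∏ l, x (f l) (j l) := by
    intro ε
    have := Finset.prod_univ_sum (fun _ : Fin m => (Finset.univ : Finset (Fin m)))
      (fun l k => sg (ε k) * x k (j l))
    rw [Fintype.piFinset_univ] at this
    rw [this, Finset.mul_sum]
    refine Finset.sum_congr rfl fun f _ => ?_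
    rw [Finset.prod_mul_distrib]; ring
  simp only [h1]
  rw [Finset.expect_sum_comm]
  simp only [← Finset.expect_mul]
  symm
  rw [← Equiv.sum_comp (Equiv.inv (Equiv.Perm (Fin m)))]
  refine Finset.sum_of_injOn (fun σ : Equiv.Perm (Fin m) => (σ : Fin m → Fin m)) ?_ ?_ ?_ ?_
  · intro a _ b _ h
    exact DFunLike.coe_injective h
  · intro a _; simp
  · intro f _ hf
    rw [sign_avg, zero_mul]
    intro hs
    apply hf
    exact ⟨Equiv.ofBijective f (Finite.surjective_iff_bijective.1 hs), by simp, by ext; simp⟩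
  · intro σ _
    have : ∀ ε : Fin m → Bool, (∏ k, sg (ε k)) * ∏ l, sg (ε (σ l)) = 1 := by
      intro ε
      rw [Equiv.prod_comp σ (fun k => sg (ε k)), ← Finset.prod_mul_distrib]
      refine Finset.prod_eq_one fun k _ => ?_
      cases ε k <;> simp [sg]
    simp only [this, Fintype.expect_const, one_mul]
    rw [← Equiv.prod_comp σ]
    simp

lemma eval_rep {m n : ℕ} (P : MvPolynomial (Fin n) ℝ) (J : (Fin n →₀ ℕ) → Fin m → Fin n)
    (hJ : ∀ α ∈ P.support, α = ∑ k, Finsupp.single (J α k) 1) (x : Fin n → ℝ) :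
    eval x P = ∑ α ∈ P.support, coeff α P * ∏ l, x (J α l) := by
  rw [eval_eq']
  refine Finset.sum_congr rfl fun α hα => ?_
  congr 1
  conv_lhs => rw [hJ α hα]
  simp only [Finsupp.finsetSum_apply, ← Finset.prod_pow_eq_pow_sum]
  rw [Finset.prod_comm]
  refine Finset.prod_congr rfl fun l _ => ?_
  simp [Finsupp.single_apply, pow_ite]

lemma le_supNorm {n : ℕ} (P : MvPolynomial (Fin n) ℝ) (x : Fin n → ℝ) (hx : ∀ i, |x i| ≤ 1) :
    |eval x P| ≤ supNorm P := by
  refine le_csSup ?_ ⟨x, hx, rfl⟩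
  have hc : IsCompact (Set.pi Set.univ (fun _ : Fin n => Set.Icc (-1 : ℝ) 1)) :=
    isCompact_univ_pi fun _ => isCompact_Icc
  have := (hc.image (f := fun x => |eval x P|) (MvPolynomial.continuous_eval P).abs).bddAbove
  refine this.mono ?_
  rintro y ⟨x, hx, rfl⟩
  exact ⟨x, fun i _ => abs_le.1 (hx i), rfl⟩

lemma supNorm_nonneg {n : ℕ} (P : MvPolynomial (Fin n) ℝ) : 0 ≤ supNorm P :=
  (abs_nonneg _).trans (le_supNorm P 0 (by simp))

lemma upper {d n : ℕ} (P : MvPolynomial (Fin n) ℝ) (hP : P.IsHomogeneous (d+1)) :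
    lpNorm (2 * (d+1 : ℕ) / ((d+1 : ℕ) + 1)) P ≤
      (Real.sqrt (3 ^ d) * (d+1 : ℕ) ^ (d+1)) * supNorm P := by
  have hdeg : ∀ α ∈ P.support, ∃ j : Fin (d+1) → Fin n, α = ∑ k, Finsupp.single (j k) 1 := by
    intro α h
    refine exists_rep (d+1) α ?_
    have := hP (mem_support_iff.1 h)
    rw [← this, Finsupp.degree_eq_weight_one]
    rfl
  by_cases hP0 : P = 0
  · subst hP0
    have h1 : (1 / (2 * (d+1 : ℕ) / ((d+1 : ℕ) + 1)) : ℝ) ≠ 0 := by positivity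
    have := supNorm_nonneg (0 : MvPolynomial (Fin n) ℝ)
    unfold lpNorm
    rw [support_zero, Finset.sum_empty, Real.zero_rpow h1]
    positivity
  obtain ⟨α₀, hα₀⟩ := Finset.nonempty_of_ne_empty (mt support_eq_empty.1 hP0)
  obtain ⟨j₀, -⟩ := hdeg α₀ hα₀
  set m := d + 1 with hm
  have hex : ∀ α : Fin n →₀ ℕ, ∃ j : Fin m → Fin n, α ∈ P.support → α = ∑ k, Finsupp.single (j k) 1 := by
    intro α
    by_cases h : α ∈ P.support
    · obtain ⟨j, hj⟩ := hdeg α h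
      exact ⟨j, fun _ => hj⟩
    · exact ⟨j₀, fun h' => absurd h' h⟩
  choose J hJ using hex
  set b : (Fin m → Fin n) → ℝ := fun i =>
    ∑ α ∈ P.support, coeff α P * ∑ σ : Equiv.Perm (Fin m), if (fun k => J α (σ k)) = i then 1 else 0
    with hb
  have hev := eval_rep P J hJ
  have hbig : ∀ x : Fin n → ℝ, (∀ i, |x i| ≤ m) → |eval x P| ≤ m ^ m * supNorm P := by
    intro x hx
    have hm0 : (0 : ℝ) < m := by positivity
    have h1 : eval x P = m ^ m * eval (fun i => x i / m) P := by
      rw [hev, hev, Finset.mul_sum]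
      refine Finset.sum_congr rfl fun α _ => ?_
      rw [Finset.prod_div_distrib, Finset.prod_const, Finset.card_univ, Fintype.card_fin]
      field_simp
    rw [h1, abs_mul, abs_of_nonneg (by positivity : (0 : ℝ) ≤ m ^ m)]
    gcongr
    refine le_supNorm P _ fun i => ?_
    rw [abs_div, abs_of_pos hm0, div_le_one hm0]
    exact hx i
  have hT : ∀ ω : Fin m → Fin n → Bool,
      |∑ i, b i * ∏ k, sg (ω k (i k))| ≤ m ^ m * supNorm P := by
    intro ω
    have h1 : ∑ i, b i * ∏ k, sg (ω k (i k)) =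
        𝔼 ε : Fin m → Bool, (∏ k, sg (ε k)) * eval (fun i => ∑ k, sg (ε k) * sg (ω k i)) P := by
      simp only [hev, Finset.mul_sum]
      rw [Finset.expect_sum_comm]
      simp only [mul_left_comm _ (coeff _ P), ← Finset.mul_expect]
      simp only [polar (J _) (fun k i => sg (ω k i))]
      simp only [hb, Finset.sum_mul]
      rw [Finset.sum_comm]
      refine Finset.sum_congr rfl fun α _ => ?_
      simp only [mul_assoc, ← Finset.mul_sum]
      congr 1
      simp only [Finset.sum_mul]
      rw [Finset.sum_comm]
      refine Finset.sum_congr rfl fun σ _ => ?_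
      simp
    rw [h1]
    refine (Finset.abs_expect_le _ _).trans ?_
    refine Finset.expect_le Finset.univ_nonempty fun ε _ => ?_
    rw [abs_mul, Finset.abs_prod]
    calc _ ≤ 1 * |eval (fun i => ∑ k, sg (ε k) * sg (ω k i)) P| := by
          gcongr
          exact Finset.prod_le_one (fun _ _ => abs_nonneg _) (fun _ _ => sg_abs _)
      _ ≤ _ := by
          rw [one_mul]
          refine hbig _ fun i => ?_
          refine (Finset.abs_sum_le_sum_abs _ _).trans ?_
          calc _ ≤ ∑ k : Fin m, (1 : ℝ) := by
                refine Finset.sum_le_sum fun k _ => ?_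
                rw [abs_mul]
                exact mul_le_one₀ (sg_abs _) (abs_nonneg _) (sg_abs _)
            _ = _ := by simp
  have hab : ∀ α ∈ P.support, |coeff α P| ≤ |b (J α)| := by
    intro α hα
    have : b (J α) = coeff α P * ∑ σ : Equiv.Perm (Fin m),
        if (fun k => J α (σ k)) = J α then 1 else 0 := by
      rw [hb]
      refine Finset.sum_eq_single α ?_ (fun h => absurd hα h)
      intro β hβ hne
      refine mul_eq_zero_of_right _ (Finset.sum_eq_zero fun σ _ => if_neg ?_)
      intro he
      apply hne
      rw [hJ α hα, hJ β hβ, ← he]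
      exact (Equiv.sum_comp σ (fun k => Finsupp.single (J β k) 1)).symm
    rw [this, abs_mul]
    refine le_mul_of_one_le_right (abs_nonneg _) (le_trans ?_ (le_abs_self _))
    refine le_trans ?_ (Finset.single_le_sum (a := (1 : Equiv.Perm (Fin m))) (fun σ _ => by positivity) (Finset.mem_univ _))
    simp
  have hp : (0 : ℝ) < 2 * m / (m + 1) := by positivity
  have hsum : ∑ α ∈ P.support, |coeff α P| ^ (2 * m / (m + 1) : ℝ) ≤
      ∑ i, |b i| ^ (2 * m / (m + 1) : ℝ) := by
    calc _ ≤ ∑ α ∈ P.support, |b (J α)| ^ (2 * m / (m + 1) : ℝ) := by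
          refine Finset.sum_le_sum fun α hα => ?_
          exact Real.rpow_le_rpow (abs_nonneg _) (hab α hα) hp.le
      _ = ∑ i ∈ P.support.image J, |b i| ^ (2 * m / (m + 1) : ℝ) := by
          rw [Finset.sum_image]
          intro α hα β hβ h
          rw [hJ α hα, hJ β hβ, h]
      _ ≤ _ := Finset.sum_le_univ_sum_of_nonneg fun i => by positivity
  refine le_of_forall_gt_imp_ge_of_dense fun W hW => ?_
  have hs := supNorm_nonneg P
  have hW0 : 0 < W := lt_of_le_of_lt (by positivity) hW
  have hbl := blei (m := m) (by omega) b W hW0 (fun k => (mixed b _ hT k).trans (by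
    rw [← mul_assoc]; exact hW.le))
  unfold lpNorm
  calc _ ≤ (W ^ (2 * m / (m + 1) : ℝ)) ^ (1 / (2 * m / (m + 1)) : ℝ) :=
        Real.rpow_le_rpow (Finset.sum_nonneg fun _ _ => by positivity) (hsum.trans hbl) (by positivity)
    _ = W := by
        rw [← Real.rpow_mul hW0.le, mul_one_div_cancel hp.ne', Real.rpow_one]

def uu {k : ℕ} (l : Fin k) : Fin (2 * k + 1) := ⟨2 * l, by omega⟩
def vv {k : ℕ} (l : Fin k) : Fin (2 * k + 1) := ⟨2 * l + 1, by omega⟩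

noncomputable def gg {k : ℕ} (l : Fin k) (t : Fin 3) : Fin (2 * k + 1) →₀ ℕ :=
  ![Finsupp.single (uu l) 2, Finsupp.single (vv l) 2,
    Finsupp.single (uu l) 1 + Finsupp.single (vv l) 1] t

def cc (t : Fin 3) : ℝ := ![1, -1, 1] t

noncomputable def al {k : ℕ} (r : ℕ) (f : Fin k → Fin 3) : Fin (2 * k + 1) →₀ ℕ :=
  ∑ l, gg l (f l) + Finsupp.single (Fin.last (2 * k)) r

noncomputable def PP (k r : ℕ) : MvPolynomial (Fin (2 * k + 1)) ℝ :=
  ∑ f : Fin k → Fin 3, monomial (al r f) (∏ l, cc (f l))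

lemma al_inj {k : ℕ} (r : ℕ) : Function.Injective (al (k := k) r) := by
  have h : ∀ (f : Fin k → Fin 3) (l : Fin k), al r f (uu l) = ![2, 0, 1] (f l) := by
    intro f l
    unfold al
    have h1 : ∀ l' : Fin k, gg l' (f l') (uu l) = if l' = l then ![2, 0, 1] (f l) else 0 := by
      intro l'
      have e1 : vv l' ≠ uu l := by
        intro h; have := congrArg Fin.val h; simp [uu, vv] at this; omega
      by_cases hl : l' = l
      · subst hl
        generalize f l' = t
        fin_cases t <;> simp [gg, e1, Finsupp.single_apply]
      · have e2 : uu l' ≠ uu l := by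
          intro h; have := congrArg Fin.val h; simp [uu] at this; omega
        generalize f l' = t
        fin_cases t <;> simp [gg, e1, e2, hl, Finsupp.single_apply]
    have e3 : Fin.last (2 * k) ≠ uu l := by
      intro h; have := congrArg Fin.val h; simp [uu] at this; omega
    simp [h1, e3, Finsupp.single_apply, Finsupp.finsetSum_apply]
  intro f f' hff
  funext l
  have := h f l
  rw [hff, h f' l] at this
  generalize f l = t at *
  generalize f' l = t' at *
  fin_cases t <;> fin_cases t' <;> simp at this ⊢

lemma cc_abs (t : Fin 3) : |cc t| = 1 := by fin_cases t <;> simp [cc]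

lemma PP_coeff (k r : ℕ) (f : Fin k → Fin 3) : coeff (al r f) (PP k r) = ∏ l, cc (f l) := by
  unfold PP
  rw [coeff_sum, Finset.sum_eq_single f]
  · simp
  · intro g _ hg
    rw [coeff_monomial, if_neg fun h => hg (al_inj r h)]
  · simp

lemma PP_abs (k r : ℕ) (f : Fin k → Fin 3) : |coeff (al r f) (PP k r)| = 1 := by
  rw [PP_coeff, Finset.abs_prod]
  simp [cc_abs]

lemma PP_support (k r : ℕ) : (PP k r).support = Finset.univ.image (al r) := by
  ext β
  simp only [mem_support_iff, Finset.mem_image, Finset.mem_univ, true_and]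
  constructor
  · intro h
    by_contra hn
    push Not at hn
    apply h
    unfold PP
    rw [coeff_sum]
    refine Finset.sum_eq_zero fun f _ => ?_
    rw [coeff_monomial, if_neg (hn f)]
  · rintro ⟨f, rfl⟩ h0
    have := PP_abs k r f
    rw [h0] at this
    simp at this

lemma PP_lp (k r : ℕ) (p : ℝ) : lpNorm p (PP k r) = ((3 : ℝ) ^ k) ^ (1 / p) := by
  unfold lpNorm
  rw [PP_support, Finset.sum_image (fun _ _ _ _ h => al_inj r h)]
  simp [PP_abs]

lemma gg_deg {k : ℕ} (l : Fin k) (t : Fin 3) : (gg l t).degree = 2 := by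
  fin_cases t <;> simp [gg]

lemma PP_hom (k r : ℕ) : (PP k r).IsHomogeneous (2 * k + r) := by
  refine IsHomogeneous.sum _ _ _ fun f _ => isHomogeneous_monomial _ ?_
  simp [al, gg_deg, mul_comm]

lemma PP_eval (k r : ℕ) (x : Fin (2 * k + 1) → ℝ) : eval x (PP k r) =
    (∏ l : Fin k, (x (uu l) ^ 2 - x (vv l) ^ 2 + x (uu l) * x (vv l))) * x (Fin.last _) ^ r := by
  have h1 : ∀ l : Fin k, x (uu l) ^ 2 - x (vv l) ^ 2 + x (uu l) * x (vv l) =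
      ∑ t : Fin 3, cc t * eval x (monomial (gg l t) 1) := by
    intro l
    have e1 : uu l ≠ vv l := by
      intro h; have := congrArg Fin.val h; simp [uu, vv] at this
    have : monomial (Finsupp.single (uu l) 1 + Finsupp.single (vv l) 1) (1 : ℝ) =
      X (uu l) * X (vv l) := by simp [X, monomial_mul]
    rw [Fin.sum_univ_three]
    simp [cc, gg, this, eval_monomial]
    ring
  simp only [h1]
  have := Finset.prod_univ_sum (fun _ : Fin k => (Finset.univ : Finset (Fin 3)))
    (fun l t => cc t * eval x (monomial (gg l t) 1))
  rw [Fintype.piFinset_univ] at this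
  rw [this, Finset.sum_mul]
  unfold PP
  rw [map_sum]
  refine Finset.sum_congr rfl fun f _ => ?_
  have h2 : monomial (al r f) (∏ l, cc (f l)) =
      C (∏ l, cc (f l)) * ((∏ l, monomial (gg l (f l)) 1) * monomial (Finsupp.single (Fin.last (2 * k)) r) 1) := by
    rw [← monomial_sum_one, monomial_mul, C_mul_monomial]
    simp [al]
  rw [h2]
  simp [Finset.prod_mul_distrib, eval_monomial, map_prod]
  ring

lemma PP_sup (k r : ℕ) : supNorm (PP k r) ≤ (5 / 4 : ℝ) ^ k := by
  unfold supNorm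
  refine csSup_le ⟨_, 0, by simp, rfl⟩ ?_
  rintro y ⟨x, hx, rfl⟩
  rw [PP_eval, abs_mul, abs_pow, Finset.abs_prod]
  have h1 : ∏ l : Fin k, |x (uu l) ^ 2 - x (vv l) ^ 2 + x (uu l) * x (vv l)| ≤ (5 / 4 : ℝ) ^ k := by
    calc _ ≤ ∏ l : Fin k, (5 / 4 : ℝ) := by
          refine Finset.prod_le_prod (fun _ _ => abs_nonneg _) fun l _ => ?_
          have a1 := (sq_le_one_iff_abs_le_one _).2 (hx (uu l))
          have a2 := (sq_le_one_iff_abs_le_one _).2 (hx (vv l))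
          rw [abs_le]
          constructor
          · nlinarith [sq_nonneg (x (uu l) + x (vv l) / 2)]
          · nlinarith [sq_nonneg (x (vv l) - x (uu l) / 2)]
      _ = _ := by simp [div_pow]
  have h2 : |x (Fin.last (2 * k))| ^ r ≤ 1 := pow_le_one₀ (abs_nonneg _) (hx _)
  calc _ ≤ (5 / 4 : ℝ) ^ k * 1 := by gcongr
    _ = _ := mul_one _

lemma c_pos : 0 < 2 * (3 : ℝ) ^ ((1 : ℝ) / 4) / Real.sqrt 5 := by positivity

lemma c_sq : (2 * (3 : ℝ) ^ ((1 : ℝ) / 4) / Real.sqrt 5) ^ 2 = 4 / 5 * (3 : ℝ) ^ ((1 : ℝ) / 2) := by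
  rw [div_pow, mul_pow, Real.sq_sqrt (by norm_num), ← Real.rpow_natCast, ← Real.rpow_natCast, ← Real.rpow_mul (by norm_num)]
  norm_num
  ring

lemma c_four : (2 * (3 : ℝ) ^ ((1 : ℝ) / 4) / Real.sqrt 5) ^ 4 = 48 / 25 := by
  have : (2 * (3 : ℝ) ^ ((1 : ℝ) / 4) / Real.sqrt 5) ^ 4 =
    ((2 * (3 : ℝ) ^ ((1 : ℝ) / 4) / Real.sqrt 5) ^ 2) ^ 2 := by ring
  rw [this, c_sq, mul_pow, ← Real.rpow_natCast (3 ^ _), ← Real.rpow_mul (by norm_num)]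
  norm_num

lemma c_lt : 2 * (3 : ℝ) ^ ((1 : ℝ) / 4) / Real.sqrt 5 < (3 : ℝ) ^ ((1 : ℝ) / 6) := by
  refine lt_of_pow_lt_pow_left₀ 12 (by positivity) ?_
  have : (2 * (3 : ℝ) ^ ((1 : ℝ) / 4) / Real.sqrt 5) ^ 12 =
    ((2 * (3 : ℝ) ^ ((1 : ℝ) / 4) / Real.sqrt 5) ^ 4) ^ 3 := by ring
  rw [this, c_four, ← Real.rpow_natCast (3 ^ _), ← Real.rpow_mul (by norm_num)]
  norm_num

lemma num_lower (k r : ℕ) (hr : r ≤ 1) (hm : 1 < 2 * k + r) :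
    (2 * (3 : ℝ) ^ ((1 : ℝ) / 4) / Real.sqrt 5) ^ (2 * k + r) * (5 / 4) ^ k <
      ((3 : ℝ) ^ k) ^ (1 / (2 * (2 * k + r : ℕ) / ((2 * k + r : ℕ) + 1)) : ℝ) := by
  have hk : 1 ≤ k := by omega
  have hk' : (1 : ℝ) ≤ k := by exact_mod_cast hk
  have h1 : (2 * (3 : ℝ) ^ ((1 : ℝ) / 4) / Real.sqrt 5) ^ (2 * k + r) * (5 / 4) ^ k =
      (2 * (3 : ℝ) ^ ((1 : ℝ) / 4) / Real.sqrt 5) ^ r * (3 : ℝ) ^ ((k : ℝ) / 2) := by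
    rw [pow_add, pow_mul, c_sq, mul_comm _ (_ ^ r), mul_assoc, ← mul_pow]
    congr 1
    rw [show 4 / 5 * (3 : ℝ) ^ ((1 : ℝ) / 2) * (5 / 4) = (3 : ℝ) ^ ((1 : ℝ) / 2) by ring,
      ← Real.rpow_natCast, ← Real.rpow_mul (by norm_num)]
    congr 1; ring
  rw [h1, ← Real.rpow_natCast 3 k, ← Real.rpow_mul (by norm_num)]
  obtain rfl | rfl : r = 0 ∨ r = 1 := by omega
  · rw [pow_zero, one_mul]
    refine Real.rpow_lt_rpow_of_exponent_lt (by norm_num) ?_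
    push_cast
    have : (k : ℝ) * (1 / (2 * (2 * k + 0) / (2 * k + 0 + 1))) = k / 2 + 1 / 4 := by
      field_simp; ring
    rw [this]; linarith
  · rw [pow_one]
    calc _ < (3 : ℝ) ^ ((1 : ℝ) / 6) * (3 : ℝ) ^ ((k : ℝ) / 2) := by
          gcongr; exact c_lt
      _ = (3 : ℝ) ^ ((1 : ℝ) / 6 + (k : ℝ) / 2) := (Real.rpow_add (by norm_num) _ _).symm
      _ ≤ _ := by
          refine Real.rpow_le_rpow_of_exponent_le (by norm_num) ?_
          push_cast
          rw [one_div_div, mul_div_assoc', le_div_iff₀ (by positivity)]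
          nlinarith

/-- For every integer `m > 1`,
`D_{ℝ,m} > (2·3^{1/4}/√5)^m > 1.17^m`. -/
theorem real_BH_lower_exponential (m : ℕ) (hm : 1 < m) :
    (2 * (3 : ℝ) ^ ((1 : ℝ) / 4) / Real.sqrt 5) ^ m < BHconst m ∧
    (1.17 : ℝ) ^ m < (2 * (3 : ℝ) ^ ((1 : ℝ) / 4) / Real.sqrt 5) ^ m := by

  refine ⟨?_, ?_⟩
  · obtain ⟨k, r, hr, rfl⟩ : ∃ k r, r ≤ 1 ∧ m = 2 * k + r := ⟨m / 2, m % 2, by omega, by omega⟩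
    have hq : (0 : ℝ) < (5 / 4) ^ k := by positivity
    refine ((lt_div_iff₀ hq).2 (num_lower k r hr hm)).trans_le ?_
    unfold BHconst
    refine le_csInf ?_ ?_
    · obtain ⟨d, hd⟩ : ∃ d, 2 * k + r = d + 1 := ⟨2 * k + r - 1, by omega⟩
      rw [hd]
      exact ⟨_, by positivity, fun n P hP => upper P hP⟩
    · rintro D ⟨hD, h⟩
      rw [div_le_iff₀ hq]
      have := h _ (PP k r) (PP_hom k r)
      rw [PP_lp] at this
      exact this.trans (by gcongr; exact PP_sup k r)
  · refine pow_lt_pow_left₀ ?_ (by norm_num) (by omega)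
    refine lt_of_pow_lt_pow_left₀ 4 c_pos.le ?_
    rw [c_four]
    norm_num
end

section
/- For every even positive integer m, the m-homogeneous real polynomial R_m(x_1,…,x_m) = ∏_{j=1}^{m/2} (x_{2j−1}² − x_{2j}² + x_{2j−1}x_{2j}) in m variables satisfies ‖R_m‖ = (5/4)^{m/2}, where ‖R_m‖ = sup{|R_m(x)| : x ∈ [−1,1]^m}. -/
open MvPolynomial Filter

/-- For an even positive integer `m = 2k`, the polynomial
`R_m(x_1,…,x_m) = ∏_{j=1}^{m/2} (x_{2j-1}² - x_{2j}² + x_{2j-1} x_{2j})`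
in `m = 2k` variables. -/
noncomputable def Rpoly (k : ℕ) : MvPolynomial (Fin (2 * k)) ℝ :=
  ∏ j : Fin k,
    (X (⟨2 * j.1, by have := j.2; omega⟩ : Fin (2 * k)) ^ 2
      - X (⟨2 * j.1 + 1, by have := j.2; omega⟩ : Fin (2 * k)) ^ 2
      + X (⟨2 * j.1, by have := j.2; omega⟩ : Fin (2 * k))
        * X (⟨2 * j.1 + 1, by have := j.2; omega⟩ : Fin (2 * k)))

/-- For every even positive integer `m = 2k`, the `m`-homogeneous polynomial `R_m`
satisfies `‖R_m‖ = (5/4)^{m/2}`. -/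
theorem supNorm_Rpoly (k : ℕ) (hk : 0 < k) :
    supNorm (Rpoly k) = (5 / 4 : ℝ) ^ k := by
  have hev : ∀ x : Fin (2 * k) → ℝ, eval x (Rpoly k) = ∏ j : Fin k,
      (x (⟨2 * j.1, by have := j.2; omega⟩ : Fin (2 * k)) ^ 2
      - x (⟨2 * j.1 + 1, by have := j.2; omega⟩ : Fin (2 * k)) ^ 2
      + x (⟨2 * j.1, by have := j.2; omega⟩ : Fin (2 * k))
        * x (⟨2 * j.1 + 1, by have := j.2; omega⟩ : Fin (2 * k))) := by
    intro x
    simp [Rpoly, eval_prod]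
  have key : ∀ a b : ℝ, |a| ≤ 1 → |b| ≤ 1 → |a ^ 2 - b ^ 2 + a * b| ≤ 5 / 4 := by
    intro a b ha hb
    have ha2 : a ^ 2 ≤ 1 := (sq_le_one_iff_abs_le_one a).2 ha
    have hb2 : b ^ 2 ≤ 1 := (sq_le_one_iff_abs_le_one b).2 hb
    rw [abs_le]
    constructor
    · nlinarith [sq_nonneg (a + b / 2)]
    · nlinarith [sq_nonneg (b - a / 2)]
  have hG : IsGreatest {y : ℝ | ∃ x : Fin (2 * k) → ℝ, (∀ i, |x i| ≤ 1) ∧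
      y = |eval x (Rpoly k)|} ((5 / 4 : ℝ) ^ k) := by
    constructor
    · refine ⟨fun i => if i.1 % 2 = 0 then 1 else 1 / 2, ?_, ?_⟩
      · intro i
        dsimp only
        split_ifs <;> norm_num [abs_le]
      · rw [hev]
        have h2 : ∀ j : ℕ, (2 * j + 1) % 2 = 1 := by intro j; omega
        have h3 : (1 : ℝ) ^ 2 - (1 / 2) ^ 2 + 1 * (1 / 2) = 5 / 4 := by norm_num
        simp only [Nat.mul_mod_right, h2, if_true, one_ne_zero, if_false, h3,
          Finset.prod_const, Finset.card_univ, Fintype.card_fin]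
        rw [abs_of_nonneg (by positivity)]
    · rintro y ⟨x, hx, rfl⟩
      rw [hev, Finset.abs_prod]
      calc _ ≤ ∏ _j : Fin k, (5 / 4 : ℝ) :=
            Finset.prod_le_prod (fun _ _ => abs_nonneg _) (fun _ _ => key _ _ (hx _) (hx _))
        _ = _ := by simp only [Finset.prod_const, Finset.card_univ, Fintype.card_fin]
  exact hG.csSup_eq
end

section
/- For all positive integers n and m, D_{ℝ, n·2^m}(2^m) ≥ (2^n/(n+1))^{2^m − 1}, where D_{ℝ,M}(N) is the real Bohnenblust–Hille constant for M-homogeneous polynomials in N variables. -/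
open MvPolynomial Filter

lemma aux_coeff_mul {σ τ : Type} (A : MvPolynomial σ ℝ) (B : MvPolynomial τ ℝ)
    (a : σ →₀ ℕ) (b : τ →₀ ℕ) :
    coeff (a.mapDomain Sum.inl + b.mapDomain Sum.inr)
      (rename Sum.inl A * rename (Sum.inr : τ → σ ⊕ τ) B) = coeff a A * coeff b B := by
  classical
  induction A using MvPolynomial.induction_on' with
  | add p q hp hq => simp only [map_add, add_mul, coeff_add, hp, hq]
  | monomial u r =>
    induction B using MvPolynomial.induction_on' with
    | add p q hp hq => simp only [map_add, mul_add, coeff_add, hp, hq]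
    | monomial v s =>
      rw [rename_monomial, rename_monomial, monomial_mul, coeff_monomial, coeff_monomial,
        coeff_monomial]
      have key : (u.mapDomain Sum.inl + v.mapDomain Sum.inr : σ ⊕ τ →₀ ℕ)
          = a.mapDomain Sum.inl + b.mapDomain Sum.inr ↔ (u = a ∧ v = b) := by
        constructor
        · intro h
          constructor
          · ext i
            have := DFunLike.congr_fun h (Sum.inl i)
            simpa [Finsupp.mapDomain_apply Sum.inl_injective,
              Finsupp.mapDomain_of_notMem_range] using this
          · ext i
            have := DFunLike.congr_fun h (Sum.inr i)
            simpa [Finsupp.mapDomain_apply Sum.inr_injective,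
              Finsupp.mapDomain_of_notMem_range] using this
        · rintro ⟨rfl, rfl⟩; rfl
      rw [if_congr key rfl rfl]
      by_cases h1 : u = a <;> by_cases h2 : v = b <;> simp [h1, h2]

lemma aux_choose (n : ℕ) : (2 : ℝ) ^ n / (n + 1) ≤ (n.choose (n / 2) : ℝ) := by
  rw [div_le_iff₀ (by positivity)]
  have h : 2 ^ n ≤ n.choose (n / 2) * (n + 1) := by
    rw [← Nat.sum_range_choose]
    calc _ ≤ ∑ _m ∈ Finset.range (n + 1), n.choose (n / 2) :=
          Finset.sum_le_sum fun i _ => Nat.choose_le_middle i n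
      _ = _ := by simp [mul_comm]
  exact_mod_cast h

lemma aux_logconv (n k : ℕ) (hk : k ≤ n) :
    ((2 : ℝ) ^ n / (n + 1)) ^ 2 ≤
      ((2 : ℝ) ^ (2 * k) / ((2 * k : ℕ) + 1)) *
        ((2 : ℝ) ^ (2 * (n - k)) / ((2 * (n - k) : ℕ) + 1)) := by
  obtain ⟨l, rfl⟩ := Nat.exists_eq_add_of_le hk
  rw [Nat.add_sub_cancel_left, div_pow, div_mul_div_comm, ← pow_mul, ← pow_add]
  rw [show (k + l) * 2 = 2 * k + 2 * l by ring]
  push_cast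
  gcongr
  nlinarith [sq_nonneg ((k : ℝ) - l)]

lemma aux_exists (m : ℕ) : ∃ Q : MvPolynomial (Fin (2 ^ m)) ℝ, Q.IsHomogeneous (2 ^ m) ∧
    (∀ x : Fin (2 ^ m) → ℝ, (∀ i, |x i| ≤ 1) → |eval x Q| ≤ 1) ∧
    ∀ n : ℕ, ∃ α, ((2 : ℝ) ^ n / (n + 1)) ^ (2 ^ m - 1) ≤ |coeff α (Q ^ n)| := by
  induction m with
  | zero =>
    refine ⟨X 0, isHomogeneous_X _ _, fun x hx => by simpa using hx 0, fun n => ?_⟩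
    refine ⟨Finsupp.single 0 n, ?_⟩
    rw [X_pow_eq_monomial, coeff_monomial]
    simp
  | succ m ih =>
    obtain ⟨Q, hQ, hb, hc⟩ := ih
    let e : Fin (2 ^ m) ⊕ Fin (2 ^ m) ≃ Fin (2 ^ (m + 1)) :=
      finSumFinEquiv.trans (finCongr (by ring))
    let R : MvPolynomial (Fin (2 ^ m) ⊕ Fin (2 ^ m)) ℝ :=
      (rename Sum.inl Q) ^ 2 - (rename Sum.inr Q) ^ 2
    have hR : R.IsHomogeneous (2 ^ (m + 1)) := by
      rw [pow_succ]
      exact (hQ.rename_isHomogeneous.pow 2).sub (hQ.rename_isHomogeneous.pow 2)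
    refine ⟨rename e R, hR.rename_isHomogeneous, ?_, ?_⟩
    · intro x hx
      rw [eval_rename]
      simp only [R, map_sub, map_pow, eval_rename]
      have h1 := hb ((x ∘ e) ∘ Sum.inl) (fun i => hx _)
      have h2 := hb ((x ∘ e) ∘ Sum.inr) (fun i => hx _)
      rw [← sq_le_one_iff_abs_le_one] at h1 h2
      rw [abs_le]
      constructor <;> nlinarith [sq_nonneg (eval ((x ∘ e) ∘ Sum.inl) Q),
        sq_nonneg (eval ((x ∘ e) ∘ Sum.inr) Q)]
    · intro n
      set k := n / 2 with hkdef
      have hk : k ≤ n := Nat.div_le_self _ _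
      obtain ⟨a, ha⟩ := hc (2 * k)
      obtain ⟨b, hb'⟩ := hc (2 * (n - k))
      refine ⟨(a.mapDomain Sum.inl + b.mapDomain Sum.inr).mapDomain e, ?_⟩
      rw [← map_pow, coeff_rename_mapDomain _ e.injective]
      have hne : coeff a (Q ^ (2 * k)) ≠ 0 := by
        intro h0
        rw [h0, abs_zero] at ha
        exact absurd ha (not_le.2 (by positivity))
      have hdeg : a.degree = 2 ^ m * (2 * k) := by
        by_contra h
        exact hne ((hQ.pow _).coeff_eq_zero h)
      have hco : coeff (a.mapDomain Sum.inl + b.mapDomain Sum.inr) (R ^ n) =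
          (-1) ^ (n - k) * (n.choose k) *
            (coeff a (Q ^ (2 * k)) * coeff b (Q ^ (2 * (n - k)))) := by
        have hexp : R ^ n = ∑ j ∈ Finset.range (n + 1),
            C ((-1 : ℝ) ^ (n - j) * (n.choose j)) *
              (rename Sum.inl (Q ^ (2 * j)) * rename Sum.inr (Q ^ (2 * (n - j)))) := by
          simp only [R]
          rw [sub_eq_add_neg, add_pow]
          refine Finset.sum_congr rfl fun j _ => ?_
          rw [neg_pow]
          simp only [map_pow, map_mul, map_neg, map_one, map_natCast, pow_mul]
          ring
        rw [hexp, coeff_sum, Finset.sum_eq_single k]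
        · rw [coeff_C_mul, aux_coeff_mul]
        · intro j _ hj
          rw [coeff_C_mul, aux_coeff_mul, (hQ.pow (2 * j)).coeff_eq_zero]
          · simp
          · rw [hdeg]
            intro h
            have := Nat.eq_of_mul_eq_mul_left (by positivity) h
            omega
        · intro h
          exact absurd (Finset.mem_range.2 (by omega)) h
      rw [hco, abs_mul, abs_mul, abs_mul, abs_pow, abs_neg, abs_one, one_pow, one_mul,
        Nat.abs_cast]
      have h3 := aux_choose n
      have h4 := aux_logconv n k hk
      have hpos : (0 : ℝ) ≤ (2 : ℝ) ^ n / (n + 1) := by positivity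
      have hexp2 : 2 ^ (m + 1) - 1 = 1 + 2 * (2 ^ m - 1) := by
        have := Nat.one_le_two_pow (n := m)
        rw [pow_succ]; omega
      rw [hexp2, pow_add, pow_one, pow_mul]
      refine mul_le_mul h3 ?_ (by positivity) (by positivity)
      refine (pow_le_pow_left₀ (by positivity) h4 _).trans ?_
      rw [mul_pow]
      exact mul_le_mul ha hb' (by positivity) (by positivity)

lemma aux_bdd {N : ℕ} (P : MvPolynomial (Fin N) ℝ) :
    BddAbove {y : ℝ | ∃ x : Fin N → ℝ, (∀ i, |x i| ≤ 1) ∧ y = |eval x P|} := by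
  have hc : IsCompact (Set.pi Set.univ fun _ : Fin N => Set.Icc (-1 : ℝ) 1) :=
    isCompact_univ_pi fun _ => isCompact_Icc
  have hcont : Continuous fun x : Fin N → ℝ => |eval x P| := (continuous_eval P).abs
  refine (hc.image hcont).bddAbove.mono ?_
  rintro y ⟨x, hx, rfl⟩
  exact ⟨x, fun i _ => abs_le.1 (hx i), rfl⟩

lemma aux_le_supNorm {N : ℕ} (P : MvPolynomial (Fin N) ℝ) (x : Fin N → ℝ)
    (hx : ∀ i, |x i| ≤ 1) : |eval x P| ≤ supNorm P :=
  le_csSup (aux_bdd P) ⟨x, hx, rfl⟩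

lemma aux_supNorm_nonneg {N : ℕ} (P : MvPolynomial (Fin N) ℝ) : 0 ≤ supNorm P :=
  (abs_nonneg _).trans (aux_le_supNorm P 0 (by simp))

lemma aux_coeff_bound (N M : ℕ) (α : Fin N →₀ ℕ) : ∃ K : ℝ, 0 ≤ K ∧
    ∀ P : MvPolynomial (Fin N) ℝ, P.IsHomogeneous M → |coeff α P| ≤ K * supNorm P := by
  let K : Set (Fin N → ℝ) := Set.pi Set.univ fun _ : Fin N => Set.Icc (-1 : ℝ) 1
  have hK : IsCompact K := isCompact_univ_pi fun _ => isCompact_Icc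
  have : CompactSpace K := isCompact_iff_compactSpace.1 hK
  let W := restrictTotalDegree (Fin N) ℝ M
  let T : W →ₗ[ℝ] ContinuousMap K ℝ :=
    { toFun := fun P => ⟨fun x => eval x.1 P.1, (continuous_eval P.1).comp continuous_subtype_val⟩
      map_add' := by intro P Q; ext x; simp
      map_smul' := by intro c P; ext x; simp }
  have hT : Function.Injective T := by
    intro P Q h
    apply Subtype.ext
    apply MvPolynomial.funext_set (fun _ : Fin N => Set.Icc (-1 : ℝ) 1)
      (fun _ => Set.Icc_infinite (by norm_num))
    intro x hx
    exact DFunLike.congr_fun h ⟨x, hx⟩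
  let e := LinearEquiv.ofInjective T hT
  let φ : LinearMap.range T →ₗ[ℝ] ℝ := (lcoeff ℝ α ∘ₗ W.subtype) ∘ₗ e.symm.toLinearMap
  have : FiniteDimensional ℝ (LinearMap.range T) := inferInstance
  let V : Submodule ℝ (ContinuousMap K ℝ) := LinearMap.range T
  let i1 : NormedAddCommGroup (ContinuousMap K ℝ) := inferInstance
  let i2 : NormedSpace ℝ (ContinuousMap K ℝ) := inferInstance
  let i3 : NormedAddCommGroup V := inferInstance
  let i4 : NormedSpace ℝ V := inferInstance
  let ψ : V →L[ℝ] ℝ := LinearMap.toContinuousLinearMap φ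
  refine ⟨‖ψ‖, norm_nonneg _, fun P hP => ?_⟩
  have hPW : P ∈ W := by
    rw [mem_restrictTotalDegree]
    exact hP.totalDegree_le
  have h := ψ.le_opNorm (e ⟨P, hPW⟩)
  have h1 : ψ (e ⟨P, hPW⟩) = coeff α P := by
    simp [ψ, φ]
  rw [h1, Real.norm_eq_abs] at h
  refine h.trans (mul_le_mul_of_nonneg_left ?_ (norm_nonneg _))
  change ‖T ⟨P, hPW⟩‖ ≤ _
  rw [ContinuousMap.norm_le _ (aux_supNorm_nonneg P)]
  intro x
  exact aux_le_supNorm P x.1 fun i => abs_le.2 (x.2 i trivial)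

lemma aux_nonempty (N M : ℕ) (p : ℝ) (hp : 0 < p) : ∃ D : ℝ, 0 < D ∧
    ∀ P : MvPolynomial (Fin N) ℝ, P.IsHomogeneous M → lpNorm p P ≤ D * supNorm P := by
  choose K hK0 hK using aux_coeff_bound N M
  let S : Finset (Fin N →₀ ℕ) := (Finsupp.finite_of_degree_eq M).toFinset
  let A : ℝ := ∑ α ∈ S, K α ^ p
  have hA : 0 ≤ A := Finset.sum_nonneg fun α _ => Real.rpow_nonneg (hK0 α) _
  refine ⟨A ^ (1 / p) + 1, by positivity, fun P hP => ?_⟩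
  have hs := aux_supNorm_nonneg P
  have hsub : P.support ⊆ S := by
    intro α hα
    simp only [S, Set.Finite.mem_toFinset, Set.mem_ofPred_eq]
    by_contra h
    exact (mem_support_iff.1 hα) (hP.coeff_eq_zero h)
  have h1 : ∑ α ∈ P.support, |coeff α P| ^ p ≤ A * supNorm P ^ p := by
    calc _ ≤ ∑ α ∈ S, |coeff α P| ^ p :=
          Finset.sum_le_sum_of_subset_of_nonneg hsub fun _ _ _ => by positivity
      _ ≤ ∑ α ∈ S, K α ^ p * supNorm P ^ p := by
          refine Finset.sum_le_sum fun α _ => ?_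
          rw [← Real.mul_rpow (hK0 α) hs]
          exact Real.rpow_le_rpow (abs_nonneg _) (hK α P hP) hp.le
      _ = _ := by rw [Finset.sum_mul]
  unfold lpNorm
  calc _ ≤ (A * supNorm P ^ p) ^ (1 / p) :=
        Real.rpow_le_rpow (Finset.sum_nonneg fun _ _ => by positivity) h1 (by positivity)
    _ = A ^ (1 / p) * supNorm P := by
        rw [Real.mul_rpow hA (by positivity), one_div, Real.rpow_rpow_inv hs hp.ne']
    _ ≤ _ := by nlinarith

lemma aux_coeff_le_lpNorm {N : ℕ} (p : ℝ) (hp : 0 < p) (P : MvPolynomial (Fin N) ℝ)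
    (α : Fin N →₀ ℕ) : |coeff α P| ≤ lpNorm p P := by
  unfold lpNorm
  by_cases hα : α ∈ P.support
  · have h := Finset.single_le_sum (f := fun α => |coeff α P| ^ p)
      (fun _ _ => by positivity) hα
    have h2 := Real.rpow_le_rpow (by positivity) h (z := 1 / p) (by positivity)
    rwa [one_div, Real.rpow_rpow_inv (abs_nonneg _) hp.ne', ← one_div] at h2
  · rw [notMem_support_iff.1 hα, abs_zero]
    exact Real.rpow_nonneg (Finset.sum_nonneg fun _ _ => by positivity) _

/-- For all positive integers `n` and `m`,
`D_{ℝ, n·2^m}(2^m) ≥ (2^n/(n+1))^{2^m - 1}`. -/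
theorem real_BH_lower_fixed_dim (n m : ℕ) (hn : 0 < n) (hm : 0 < m) :
    ((2 : ℝ) ^ n / (n + 1)) ^ (2 ^ m - 1) ≤ BHconstN (n * 2 ^ m) (2 ^ m) := by
  have hM : 0 < n * 2 ^ m := by positivity
  have hp : (0 : ℝ) < 2 * ((n * 2 ^ m : ℕ) : ℝ) / (((n * 2 ^ m : ℕ) : ℝ) + 1) := by
    have : (0 : ℝ) < ((n * 2 ^ m : ℕ) : ℝ) := by exact_mod_cast hM
    positivity
  unfold BHconstN
  refine le_csInf (aux_nonempty _ _ _ hp) ?_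
  rintro D ⟨hD, h⟩
  obtain ⟨Q, hQ, hb, hc⟩ := aux_exists m
  obtain ⟨α, hα⟩ := hc n
  have hhom : (Q ^ n).IsHomogeneous (n * 2 ^ m) := by
    rw [mul_comm]
    exact hQ.pow n
  have hsup : supNorm (Q ^ n) ≤ 1 := by
    refine csSup_le ⟨_, 0, by simp, rfl⟩ ?_
    rintro y ⟨x, hx, rfl⟩
    rw [map_pow, abs_pow]
    exact pow_le_one₀ (abs_nonneg _) (hb x hx)
  calc _ ≤ |coeff α (Q ^ n)| := hα
    _ ≤ _ := aux_coeff_le_lpNorm _ hp _ α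
    _ ≤ D * supNorm (Q ^ n) := h _ hhom
    _ ≤ D := by nlinarith
end

section
/- Define recursively the real polynomials Q_2(x_1,x_2) = x_1² − x_2² and Q_{2^m}(x_1,…,x_{2^m}) = Q_{2^{m−1}}(x_1,…,x_{2^{m−1}})² − Q_{2^{m−1}}(x_{2^{m−1}+1},…,x_{2^m})². Then for all positive integers m and n, the maximal absolute value of a coefficient of the polynomial Q_{2^m}^n satisfies |Q_{2^m}^n|_∞ ≥ (2^n/(n+1))^{2^m − 1}. -/
open MvPolynomial

/-- The maximal absolute value of the coefficients of a real polynomial. -/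
noncomputable def linfNorm {n : ℕ} (P : MvPolynomial (Fin n) ℝ) : ℝ :=
  ⨆ α : Fin n →₀ ℕ, |coeff α P|

/-- `Qpoly m` is the polynomial `Q_{2^{m+1}}` in `2^{m+1}` variables, defined recursively
by `Q_2(x₁,x₂) = x₁² - x₂²` and
`Q_{2^m}(x₁,…,x_{2^m}) = Q_{2^{m-1}}(x₁,…,x_{2^{m-1}})² - Q_{2^{m-1}}(x_{2^{m-1}+1},…,x_{2^m})²`. -/
noncomputable def Qpoly : (m : ℕ) → MvPolynomial (Fin (2 ^ (m + 1))) ℝ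
  | 0 => X ⟨0, by norm_num⟩ ^ 2 - X ⟨1, by norm_num⟩ ^ 2
  | (m + 1) =>
      (rename (fun i : Fin (2 ^ (m + 1)) =>
          (⟨i.1, by
            have h := i.2
            have h2 : (2 : ℕ) ^ (m + 1) ≤ 2 ^ (m + 2) :=
              Nat.pow_le_pow_right (by norm_num) (Nat.le_succ _)
            omega⟩ : Fin (2 ^ (m + 2)))) (Qpoly m)) ^ 2
      - (rename (fun i : Fin (2 ^ (m + 1)) =>
          (⟨2 ^ (m + 1) + i.1, by
            have h := i.2
            have h2 : (2 : ℕ) ^ (m + 2) = 2 ^ (m + 1) * 2 := pow_succ 2 (m + 1)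
            omega⟩ : Fin (2 ^ (m + 2)))) (Qpoly m)) ^ 2

theorem aux_coeff {σ τ : Type} (f g : σ → τ) (hf : f.Injective) (hg : g.Injective)
    (hfg : ∀ i j, f i ≠ g j) (P R : MvPolynomial σ ℝ) (α β : σ →₀ ℕ) :
    coeff (α.mapDomain f + β.mapDomain g) (rename f P * rename g R)
      = coeff α P * coeff β R := by
  classical
  have key : ∀ α' β' : σ →₀ ℕ, α'.mapDomain f + β'.mapDomain g = α.mapDomain f + β.mapDomain g
      ↔ (α' = α ∧ β' = β) := by
    intro α' β'
    constructor
    · intro h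
      constructor
      · ext i
        have h1 := DFunLike.congr_fun h (f i)
        have hz : ∀ γ : σ →₀ ℕ, γ.mapDomain g (f i) = 0 := fun γ =>
          Finsupp.mapDomain_notin_range γ (f i) (by rintro ⟨j, hj⟩; exact hfg i j hj.symm)
        simpa [hz, Finsupp.mapDomain_apply hf] using h1
      · ext i
        have h1 := DFunLike.congr_fun h (g i)
        have hz : ∀ γ : σ →₀ ℕ, γ.mapDomain f (g i) = 0 := fun γ =>
          Finsupp.mapDomain_notin_range γ (g i) (by rintro ⟨j, hj⟩; exact hfg j i hj)
        simpa [hz, Finsupp.mapDomain_apply hg] using h1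
    · rintro ⟨rfl, rfl⟩; rfl
  induction P using MvPolynomial.induction_on' with
  | add p q hp hq => simp only [map_add, add_mul, coeff_add, hp, hq]
  | monomial u a =>
    induction R using MvPolynomial.induction_on' with
    | add p q hp hq => simp only [map_add, mul_add, coeff_add, hp, hq]
    | monomial v b =>
      simp only [rename_monomial, monomial_mul, coeff_monomial, key]
      by_cases h1 : u = α <;> by_cases h2 : v = β <;> simp [h1, h2]

theorem aux_step {σ τ : Type} (f g : σ → τ) (hf : f.Injective) (hg : g.Injective)
    (hfg : ∀ i j, f i ≠ g j) (A : MvPolynomial σ ℝ) (d N : ℕ) (hd : 0 < d)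
    (hA : A.IsHomogeneous d)
    (hb : ∀ n : ℕ, ∃ α, ((2 : ℝ) ^ n / (n + 1)) ^ N ≤ |coeff α (A ^ n)|) (n : ℕ) :
    ∃ α, ((2 : ℝ) ^ n / (n + 1)) ^ (2 * N + 1)
      ≤ |coeff α (((rename f A) ^ 2 - (rename g A) ^ 2) ^ n)| := by
  obtain ⟨k, l, hkl, hk⟩ : ∃ k l, k + l = n ∧ (2 : ℝ) ^ n / (n + 1) ≤ (n.choose k : ℝ) := by
    refine ⟨n / 2, n - n / 2, by omega, ?_⟩
    rw [div_le_iff₀ (by positivity)]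
    have h : 2 ^ n ≤ n.choose (n / 2) * (n + 1) := by
      rw [← Nat.sum_range_choose]
      calc _ ≤ ∑ _i ∈ Finset.range (n + 1), n.choose (n / 2) :=
            Finset.sum_le_sum fun i _ => Nat.choose_le_middle i n
        _ = _ := by simp [mul_comm]
    exact_mod_cast h
  obtain ⟨α, hα⟩ := hb (2 * k)
  obtain ⟨β, hβ⟩ := hb (2 * l)
  refine ⟨α.mapDomain f + β.mapDomain g, ?_⟩
  have hdeg : α.degree = d * (2 * k) := by
    have h0 : coeff α (A ^ (2 * k)) ≠ 0 := by
      intro h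
      rw [h, abs_zero] at hα
      exact absurd hα (not_le.mpr (by positivity))
    by_contra h
    exact h0 ((hA.pow (2 * k)).coeff_eq_zero h)
  have hc : coeff (α.mapDomain f + β.mapDomain g) (((rename f A) ^ 2 - (rename g A) ^ 2) ^ n)
      = (-1) ^ l * (n.choose k) * (coeff α (A ^ (2 * k)) * coeff β (A ^ (2 * l))) := by
    have hterm : ∀ i j : ℕ, ((rename f A) ^ 2) ^ i * (-(rename g A) ^ 2) ^ j * ((n.choose i : ℕ) : MvPolynomial τ ℝ)
        = C ((-1) ^ j * (n.choose i : ℝ)) * (rename f (A ^ (2 * i)) * rename g (A ^ (2 * j))) := by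
      intro i j
      rw [neg_pow]
      simp only [map_pow, map_mul, map_neg, map_one, map_natCast, pow_mul]
      ring
    rw [sub_eq_add_neg, add_pow, coeff_sum, Finset.sum_eq_single k]
    · rw [hterm, coeff_C_mul, aux_coeff f g hf hg hfg]
      have : n - k = l := by omega
      rw [this]
    · intro i _ hi
      rw [hterm, coeff_C_mul, aux_coeff f g hf hg hfg]
      have : coeff α (A ^ (2 * i)) = 0 := by
        apply (hA.pow (2 * i)).coeff_eq_zero
        rw [hdeg]
        intro h
        have := Nat.eq_of_mul_eq_mul_left hd h
        omega
      rw [this]; simp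
    · intro h
      exact absurd (Finset.mem_range.mpr (by omega)) h
  rw [hc]
  simp only [abs_mul, abs_pow, abs_neg, abs_one, one_pow, one_mul, Nat.abs_cast]
  have hmid : ((2 : ℝ) ^ n / (n + 1)) ^ 2
      ≤ ((2 : ℝ) ^ (2 * k) / ((2 * k : ℕ) + 1)) * ((2 : ℝ) ^ (2 * l) / ((2 * l : ℕ) + 1)) := by
    rw [div_mul_div_comm, div_pow, ← pow_add, ← pow_mul, show n * 2 = 2 * k + 2 * l by omega]
    apply div_le_div_of_nonneg_left (by positivity) (by positivity)
    subst hkl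
    push_cast
    nlinarith [sq_nonneg ((k : ℝ) - l)]
  calc ((2 : ℝ) ^ n / (n + 1)) ^ (2 * N + 1)
      = ((2 : ℝ) ^ n / (n + 1)) * (((2 : ℝ) ^ n / (n + 1)) ^ 2) ^ N := by
        rw [pow_succ, pow_mul, mul_comm]
    _ ≤ (n.choose k : ℝ) * (((2 : ℝ) ^ (2 * k) / ((2 * k : ℕ) + 1)) * ((2 : ℝ) ^ (2 * l) / ((2 * l : ℕ) + 1))) ^ N := by
        gcongr
    _ ≤ _ := by
        rw [mul_pow]
        gcongr

theorem aux_hom (m : ℕ) : (Qpoly m).IsHomogeneous (2 ^ (m + 1)) := by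
  induction m with
  | zero =>
    rw [Qpoly]
    exact ((isHomogeneous_X_pow _ 2)).sub (isHomogeneous_X_pow _ 2)
  | succ m ih =>
    have e : 2 ^ (m + 1 + 1) = 2 ^ (m + 1) * 2 := pow_succ 2 (m + 1)
    suffices h : (Qpoly (m + 1)).IsHomogeneous (2 ^ (m + 1) * 2) from
      fun _ hc => (h hc).trans e.symm
    rw [Qpoly]
    exact ((ih.rename_isHomogeneous).pow 2).sub ((ih.rename_isHomogeneous).pow 2)

theorem aux_main (m : ℕ) : ∀ n : ℕ, ∃ α,
    ((2 : ℝ) ^ n / (n + 1)) ^ (2 ^ (m + 1) - 1) ≤ |coeff α (Qpoly m ^ n)| := by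
  induction m with
  | zero =>
    intro n
    have := aux_step (σ := Unit) (τ := Fin (2 ^ (0 + 1))) (fun _ => ⟨0, by norm_num⟩)
      (fun _ => ⟨1, by norm_num⟩) (fun _ _ _ => rfl) (fun _ _ _ => rfl)
      (by intro i j h; simp at h) (X ()) 1 0 one_pos (isHomogeneous_X _ _)
      (fun n => ⟨Finsupp.single () n, by simp [coeff_X_pow]⟩) n
    simp only [rename_X] at this
    rw [Qpoly]
    exact this
  | succ m ih =>
    intro n
    rw [Qpoly, show 2 ^ (m + 1 + 1) - 1 = 2 * (2 ^ (m + 1) - 1) + 1 by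
      have := Nat.one_le_two_pow (n := m + 1)
      rw [pow_succ 2 (m + 1)]; omega]
    refine aux_step _ _ ?_ ?_ ?_ (Qpoly m) (2 ^ (m + 1)) _ (by positivity) (aux_hom m) ih n
    · intro i j h
      simp only [Fin.mk.injEq] at h
      exact Fin.ext h
    · intro i j h
      simp only [Fin.mk.injEq] at h
      exact Fin.ext (by omega)
    · intro i j h
      simp only [Fin.mk.injEq] at h
      have := i.2
      omega

/-- For all positive integers `m` and `n` (here `Q_{2^m} = Qpoly (m-1)`, so `m+1` stands
for the positive integer `m` of the statement),
`|Q_{2^m}^n|_∞ ≥ (2^n/(n+1))^{2^m - 1}`. -/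
theorem linfNorm_Qpoly_pow (m n : ℕ) (hn : 0 < n) :
    ((2 : ℝ) ^ n / (n + 1)) ^ (2 ^ (m + 1) - 1) ≤ linfNorm (Qpoly m ^ n) := by
  obtain ⟨α, hα⟩ := aux_main m n
  refine hα.trans ?_
  refine le_ciSup (f := fun α => |coeff α (Qpoly m ^ n)|) ?_ α
  refine ⟨∑ β ∈ (Qpoly m ^ n).support, |coeff β (Qpoly m ^ n)|, ?_⟩
  rintro _ ⟨β, rfl⟩
  by_cases h : β ∈ (Qpoly m ^ n).support
  · exact Finset.single_le_sum (f := fun β => |coeff β (Qpoly m ^ n)|)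
      (fun _ _ => abs_nonneg _) h
  · have h0 : coeff β (Qpoly m ^ n) = 0 := by simpa using h
    simp only [h0, abs_zero]
    exact Finset.sum_nonneg fun _ _ => abs_nonneg _
end

section
/- Fix n ≥ 2. For every m-homogeneous polynomial P in n complex variables, |P|_{2m/(m+1)} ≤ C(m+n−1, n−1)^{1/(2m)} · ‖P‖, where C(·,·) is the binomial coefficient, |P|_p is the ℓ_p norm of the coefficients of P and ‖P‖ = sup{|P(z)| : z ∈ 𝔻^n}. -/
open MvPolynomial Filter

/-- The sup norm of a complex polynomial in `n` variables over the closed polydisk `𝔻^n`. -/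
noncomputable def supNormC {n : ℕ} (P : MvPolynomial (Fin n) ℂ) : ℝ :=
  sSup {y : ℝ | ∃ z : Fin n → ℂ, (∀ i, ‖z i‖ ≤ 1) ∧ y = ‖eval z P‖}

/-- The `ℓ_p` norm of the coefficients of a complex polynomial. -/
noncomputable def lpNormC {n : ℕ} (p : ℝ) (P : MvPolynomial (Fin n) ℂ) : ℝ :=
  (∑ α ∈ P.support, ‖coeff α P‖ ^ p) ^ (1 / p)

lemma supNormC_bound {n : ℕ} (P : MvPolynomial (Fin n) ℂ) (z : Fin n → ℂ) (hz : ∀ i, ‖z i‖ ≤ 1) :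
    ‖eval z P‖ ≤ supNormC P := by
  refine le_csSup ⟨∑ α ∈ P.support, ‖coeff α P‖, ?_⟩ ⟨z, hz, rfl⟩
  rintro y ⟨w, hw, rfl⟩
  rw [eval_eq']
  refine (norm_sum_le _ _).trans (Finset.sum_le_sum fun α _ => ?_)
  rw [norm_mul, norm_prod]
  refine mul_le_of_le_one_right (norm_nonneg _) (Finset.prod_le_one (fun i _ => norm_nonneg _) ?_)
  intro i _
  rw [norm_pow]
  exact pow_le_one₀ (norm_nonneg _) (hw i)

lemma orth {n M : ℕ} [NeZero M] (ψ : AddChar (ZMod M) ℂ) (hψ : ψ.IsPrimitive)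
    (α β : Fin n →₀ ℕ) (hα : ∀ i, α i < M) (hβ : ∀ i, β i < M) :
    ∑ k : Fin n → ZMod M, (∏ i, ψ (k i) ^ α i) * (starRingEnd ℂ) (∏ i, ψ (k i) ^ β i)
      = if α = β then (M : ℂ) ^ n else 0 := by
  have h1 : ∀ k : Fin n → ZMod M,
      (∏ i, ψ (k i) ^ α i) * (starRingEnd ℂ) (∏ i, ψ (k i) ^ β i)
        = ∏ i, ψ (k i * ((α i : ZMod M) - (β i : ZMod M))) := by
    intro k
    rw [map_prod, ← Finset.prod_mul_distrib]
    refine Finset.prod_congr rfl fun i _ => ?_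
    rw [map_pow, ← AddChar.map_neg_eq_conj, ← AddChar.map_nsmul_eq_pow,
      ← AddChar.map_nsmul_eq_pow, ← AddChar.map_add_eq_mul]
    congr 1
    simp only [nsmul_eq_mul]
    ring
  simp_rw [h1]
  rw [← Fintype.prod_sum (fun i (x : ZMod M) => ψ (x * ((α i : ZMod M) - (β i : ZMod M))))]
  simp_rw [AddChar.sum_mulShift _ hψ]
  split_ifs with h
  · subst h
    simp
  · obtain ⟨i, hi⟩ : ∃ i, α i ≠ β i := by
      by_contra hc
      push Not at hc
      exact h (Finsupp.ext hc)
    apply Finset.prod_eq_zero (Finset.mem_univ i)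
    rw [if_neg]
    · simp
    rw [sub_eq_zero, ZMod.natCast_eq_natCast_iff']
    rwa [Nat.mod_eq_of_lt (hα i), Nat.mod_eq_of_lt (hβ i)]

lemma parseval {n m : ℕ} (P : MvPolynomial (Fin n) ℂ) (hP : P.IsHomogeneous m) :
    ∑ α ∈ P.support, ‖coeff α P‖ ^ 2 ≤ supNormC P ^ 2 := by
  let M := m + 1
  have hlt : ∀ α ∈ P.support, ∀ i, α i < M := by
    intro α hα i
    have := hP.degree_eq_sum_deg_support hα
    have h2 : α i ≤ ∑ i ∈ α.support, α i := Finsupp.le_degree i α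
    simp only [M]
    omega
  let ψ : AddChar (ZMod M) ℂ := ZMod.stdAddChar
  have hψ : ψ.IsPrimitive := ZMod.isPrimitive_stdAddChar M
  have key : ∑ k : Fin n → ZMod M, ‖eval (fun i => ψ (k i)) P‖ ^ 2
      = (M : ℝ) ^ n * ∑ α ∈ P.support, ‖coeff α P‖ ^ 2 := by
    have : ((∑ k : Fin n → ZMod M, ‖eval (fun i => ψ (k i)) P‖ ^ 2 : ℝ) : ℂ)
      = (((M : ℝ) ^ n * ∑ α ∈ P.support, ‖coeff α P‖ ^ 2 : ℝ) : ℂ) := by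
      push_cast
      simp_rw [← Complex.mul_conj', eval_eq', map_sum, Finset.sum_mul_sum]
      rw [Finset.sum_comm, Finset.mul_sum]
      refine Finset.sum_congr rfl fun α hα => ?_
      rw [Finset.sum_comm]
      have : ∀ β ∈ P.support, ∑ k : Fin n → ZMod M,
          (coeff α P * ∏ i, ψ (k i) ^ α i) * (starRingEnd ℂ) (coeff β P * ∏ i, ψ (k i) ^ β i)
          = if α = β then coeff α P * (starRingEnd ℂ) (coeff β P) * (M : ℂ) ^ n else 0 := by
        intro β hβ
        have := orth ψ hψ α β (hlt α hα) (hlt β hβ)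
        rw [← mul_ite_zero, ← this, Finset.mul_sum]
        refine Finset.sum_congr rfl fun k _ => ?_
        rw [map_mul]
        ring
      rw [Finset.sum_congr rfl this, Finset.sum_ite_eq, if_pos hα]
      ring
    exact_mod_cast this
  have hle : ∑ k : Fin n → ZMod M, ‖eval (fun i => ψ (k i)) P‖ ^ 2
      ≤ ∑ k : Fin n → ZMod M, supNormC P ^ 2 := by
    refine Finset.sum_le_sum fun k _ => ?_
    gcongr
    exact supNormC_bound P _ fun i => (AddChar.norm_apply ψ (k i)).le
  rw [key] at hle
  have hM : (0 : ℝ) < (M : ℝ) ^ n := by positivity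
  simp only [Finset.sum_const, Finset.card_univ, Fintype.card_pi, ZMod.card, Finset.prod_const,
    Fintype.card_fin, nsmul_eq_mul, Nat.cast_pow] at hle
  exact le_of_mul_le_mul_left hle hM

lemma card_bound {n m : ℕ} (hn : 2 ≤ n) (P : MvPolynomial (Fin n) ℂ) (hP : P.IsHomogeneous m) :
    P.support.card ≤ Nat.choose (m + n - 1) (n - 1) := by
  have h : P.support ⊆ Finset.finsuppAntidiag Finset.univ m := by
    intro α hα
    rw [Finset.mem_finsuppAntidiag]
    refine ⟨?_, Finset.subset_univ _⟩
    rw [← Finsupp.degree_eq_sum]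
    exact (hP.degree_eq_sum_deg_support hα).symm
  refine (Finset.card_le_card h).trans ?_
  rw [Finset.card_finsuppAntidiag_nat_eq_choose]
  simp only [Finset.card_univ, Fintype.card_fin]
  rw [show n + m - 1 = m + n - 1 by omega]
  exact (Nat.choose_symm_of_eq_add (by omega)).le

/-- For fixed `n ≥ 2`: every `m`-homogeneous polynomial `P` in `n` complex variables
satisfies `|P|_{2m/(m+1)} ≤ C(m+n-1, n-1)^{1/(2m)} · ‖P‖`. -/
theorem complex_BH_fixed_dim (n : ℕ) (hn : 2 ≤ n) (m : ℕ) (hm : 0 < m)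
    (P : MvPolynomial (Fin n) ℂ) (hP : P.IsHomogeneous m) :
    lpNormC (2 * m / (m + 1)) P ≤
      (Nat.choose (m + n - 1) (n - 1) : ℝ) ^ (1 / (2 * (m : ℝ))) * supNormC P := by
  have hm' : (0 : ℝ) < m := by exact_mod_cast hm
  have hS : 0 ≤ supNormC P := (norm_nonneg _).trans (supNormC_bound P 0 (by simp))
  unfold lpNormC
  set p : ℝ := 2 * m / (m + 1) with hp
  have hp0 : 0 < p := by positivity
  set q : ℝ := (m + 1) / m with hq
  have hq1 : 1 ≤ q := by
    rw [hq, le_div_iff₀ hm']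
    linarith
  have hpm := Real.rpow_sum_le_const_mul_sum_rpow_of_nonneg (s := P.support)
    (f := fun α => ‖coeff α P‖ ^ p) hq1 (fun α _ => by positivity)
  have hpq : p * q = 2 := by
    rw [hp, hq]
    field_simp
  have e1 : ∀ α, (‖coeff α P‖ ^ p) ^ q = ‖coeff α P‖ ^ 2 := by
    intro α
    rw [← Real.rpow_mul (norm_nonneg _), hpq]
    norm_num
  simp only [e1] at hpm
  have hq2 : q - 1 = 1 / (m : ℝ) := by
    rw [hq]
    field_simp
    ring
  rw [hq2] at hpm
  have h2 : (∑ α ∈ P.support, ‖coeff α P‖ ^ p) ^ q ≤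
      (Nat.choose (m + n - 1) (n - 1) : ℝ) ^ (1 / (m : ℝ)) * supNormC P ^ 2 := by
    refine hpm.trans ?_
    gcongr
    · exact card_bound hn P hP
    · exact parseval P hP
  have hs0 : 0 ≤ ∑ α ∈ P.support, ‖coeff α P‖ ^ p := Finset.sum_nonneg fun α _ => by positivity
  have h3 := Real.rpow_le_rpow (by positivity) h2 (show (0 : ℝ) ≤ 1 / 2 by norm_num)
  rw [← Real.rpow_mul hs0, Real.mul_rpow (by positivity) (by positivity),
    ← Real.rpow_mul (by positivity), ← Real.sqrt_eq_rpow (supNormC P ^ 2), Real.sqrt_sq hS] at h3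
  rw [show q * (1 / 2) = 1 / p by rw [hp, hq]; field_simp,
    show 1 / (m : ℝ) * (1 / 2) = 1 / (2 * (m : ℝ)) by field_simp] at h3
  exact h3
end
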